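/- The map f ↦ Φf is a ℂ-linear bijection from the Schwartz space S(ℝ) onto the space C^∞(𝕋², γ) = { g : ℝ² → ℂ smooth : g(φ + θ, ψ) = exp(−2πi ψ)·g(φ, ψ) and g(φ, ψ + 1) = g(φ, ψ) for all (φ, ψ) } of smooth sections of the line bundle γ over the torus; its inverse sends g to the function x ↦ ∫₀¹ g(θ·{x/θ}, ψ)·exp(−2πi ⌊x/θ⌋ ψ) dψ, where ⌊·⌋ and {·} denote the integer and fractional parts. -/

import Mathlib

open Complex SchwartzMap

/-- The transform `Φf(φ, ψ) = Σ_{n ∈ ℤ} f(φ + θn) · exp(2πi n ψ)`. -/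
noncomputable def Phi (θ : ℝ) (f : SchwartzMap ℝ ℂ) : ℝ × ℝ → ℂ :=
  fun p => ∑' n : ℤ, f (p.1 + θ * n) * Complex.exp (2 * Real.pi * Complex.I * n * p.2)

/-- The space `C^∞(𝕋², γ)` of smooth sections of the line bundle `γ` over the torus,
realized as smooth functions on `ℝ²` with the quasi-periodicity conditions. -/
def SectionsGamma (θ : ℝ) : Set (ℝ × ℝ → ℂ) :=
  {g | ContDiff ℝ (⊤ : ℕ∞) g
    ∧ (∀ φ ψ : ℝ, g (φ + θ, ψ) = Complex.exp (-(2 * Real.pi * Complex.I * ψ)) * g (φ, ψ))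
    ∧ (∀ φ ψ : ℝ, g (φ, ψ + 1) = g (φ, ψ))}

/-!
For fixed `φ`, `Φf(φ, ·)` is the Fourier series whose coefficients are the values of `f`
on the lattice coset `φ + θℤ`; its mean over a period is therefore `f(φ)`, and conversely the
quasi-periodicity of a section `g` says that the `n`-th Fourier coefficient of `g(φ, ·)` is the mean
of `g(φ + θn, ·)`. So `f ↦ Φf` and `g ↦ ∫₀¹ g(·, ψ) dψ` are mutually inverse once both are known to
land in the right space. For this, `Φ` intertwines `d/dx` with `∂/∂φ`, and multiplication by `x`
with `φ + (θ / 2πi) ∂/∂ψ`. On one side this expresses the partial derivatives of `Φf` through `Φ` of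
other Schwartz functions, so that `Φf` is smooth by induction; on the other it turns
`x ^ k (d/dx) ^ n` of the mean of a section into the mean of another section, which is bounded.
-/

open Filter Function MeasureTheory TopologicalSpace
open scoped ContDiff

section FourierSeries

lemma exp_two_pi_mul_I_mul_int_mul (n : ℤ) (t : ℝ) :
    exp (2 * Real.pi * I * n * t) = fourier n (t : UnitAddCircle) := by
  simp

lemma norm_fourier_apply {T : ℝ} (n : ℤ) (x : AddCircle T) : ‖fourier n x‖ = 1 := by
  rw [fourier_apply, Circle.norm_coe]

lemma fourierCoeff_tsum_mul_fourier {T : ℝ} [Fact (0 < T)] {c : ℤ → ℂ} (hc : Summable c)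
    (m : ℤ) : fourierCoeff (fun x : AddCircle T => ∑' n, c n * fourier n x) m = c m := by
  have integrable_term (n : ℤ) : Integrable (fun x : AddCircle T =>
      fourier (-m) x • (c n * fourier n x)) AddCircle.haarAddCircle :=
    (by fun_prop : Continuous _).integrable_of_hasCompactSupport (.of_compactSpace _)
  calc fourierCoeff (fun x : AddCircle T => ∑' n, c n * fourier n x) m
      = ∫ x : AddCircle T, ∑' n, fourier (-m) x • (c n * fourier n x)
          ∂AddCircle.haarAddCircle := by
        simp only [fourierCoeff, smul_eq_mul, tsum_mul_left]
    _ = ∑' n, fourierCoeff (fun x : AddCircle T => c n * fourier n x) m := by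
        refine (integral_tsum_of_summable_integral_norm integrable_term ?_).symm
        simpa only [norm_smul, norm_mul, norm_fourier_apply, one_mul, mul_one, integral_const,
          probReal_univ, one_smul] using hc.norm
    _ = ∑' n, if n = m then c n else 0 := by
        refine tsum_congr fun n => ?_
        rw [fourierCoeff.const_mul, fourierCoeff_fourier, Pi.single_apply, mul_ite, mul_one,
          mul_zero]
        simp only [eq_comm]
    _ = c m := tsum_ite_eq m _

lemma hasSum_fourier_series_of_periodic {T : ℝ} [Fact (0 < T)] {h : ℝ → ℂ} (hc : Continuous h)
    (hp : Periodic h T) (hs : Summable (fourierCoeff hp.lift)) (t : ℝ) :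
    HasSum (fun n : ℤ => fourierCoeff hp.lift n * fourier n (t : AddCircle T)) (h t) :=
  has_pointwise_sum_fourier_series_of_summable
    (f := ⟨hp.lift, continuous_coinduced_dom.mpr hc⟩) hs (t : AddCircle T)

end FourierSeries

section LatticeSums

variable {E : Type*} [NormedAddCommGroup E] [NormedSpace ℝ E] {θ : ℝ}

lemma summable_norm_restrict_comp_addRight (hθ : θ ≠ 0) (f : 𝓢(ℝ, E)) (K : Compacts ℝ) :
    Summable fun n : ℤ =>
      ‖((f : C(ℝ, E)).comp (ContinuousMap.addRight (θ * n))).restrict K‖ := by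
  have tendsto_lattice : Tendsto (fun n : ℤ => θ * (n : ℝ)) cofinite (cocompact ℝ) :=
    (tendsto_cocompact_mul_left₀ hθ).comp Int.tendsto_coe_cofinite
  refine summable_of_isBigO ?_ ((isBigO_norm_restrict_cocompact (f : C(ℝ, E)) two_pos
    (f.isBigO_cocompact_rpow (-2)) K).comp_tendsto tendsto_lattice)
  simpa only [comp_def, abs_mul, Real.mul_rpow (abs_nonneg _) (abs_nonneg _)] using
    (Real.summable_abs_int_rpow one_lt_two).mul_left (|θ| ^ (-2 : ℝ))

lemma exists_summable_bound_translates (hθ : θ ≠ 0) (f : 𝓢(ℝ, E)) (R : ℝ) :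
    ∃ u : ℤ → ℝ, Summable u ∧ ∀ (n : ℤ) (x : ℝ), |x| ≤ R → ‖f (x + θ * n)‖ ≤ u n := by
  let K : Compacts ℝ := ⟨Metric.closedBall 0 R, isCompact_closedBall 0 R⟩
  refine ⟨_, summable_norm_restrict_comp_addRight hθ f K, fun n x hx => ?_⟩
  exact (((f : C(ℝ, E)).comp (ContinuousMap.addRight (θ * n))).restrict K).norm_coe_le_norm
    ⟨x, mem_closedBall_zero_iff.mpr hx⟩

lemma summable_translates [CompleteSpace E] (hθ : θ ≠ 0) (f : 𝓢(ℝ, E)) (x : ℝ) :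
    Summable fun n : ℤ => f (x + θ * n) :=
  let ⟨_, hu, hf⟩ := exists_summable_bound_translates hθ f |x|
  .of_norm_bounded hu fun n => hf n x le_rfl

end LatticeSums

section Phi

variable {θ : ℝ}

/-- The `n`-th summand of `Phi θ f`, with the exponential written as a Fourier monomial of the
unit circle. -/
noncomputable def phiTerm (θ : ℝ) (f : 𝓢(ℝ, ℂ)) (n : ℤ) (p : ℝ × ℝ) : ℂ :=
  f (p.1 + θ * n) * fourier n (p.2 : UnitAddCircle)

lemma Phi_apply (θ : ℝ) (f : 𝓢(ℝ, ℂ)) (p : ℝ × ℝ) : Phi θ f p = ∑' n, phiTerm θ f n p := by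
  simp only [Phi, phiTerm, exp_two_pi_mul_I_mul_int_mul]

lemma norm_phiTerm (θ : ℝ) (f : 𝓢(ℝ, ℂ)) (n : ℤ) (p : ℝ × ℝ) :
    ‖phiTerm θ f n p‖ = ‖f (p.1 + θ * n)‖ := by
  rw [phiTerm, norm_mul, norm_fourier_apply, mul_one]

lemma hasSum_phiTerm (hθ : θ ≠ 0) (f : 𝓢(ℝ, ℂ)) (p : ℝ × ℝ) :
    HasSum (fun n => phiTerm θ f n p) (Phi θ f p) := by
  rw [Phi_apply]
  refine (Summable.of_norm ?_).hasSum
  simpa only [norm_phiTerm] using (summable_translates hθ f p.1).norm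

lemma Phi_add (hθ : θ ≠ 0) (f₁ f₂ : 𝓢(ℝ, ℂ)) : Phi θ (f₁ + f₂) = Phi θ f₁ + Phi θ f₂ := by
  ext p
  refine (hasSum_phiTerm hθ (f₁ + f₂) p).unique ?_
  simpa only [phiTerm, _root_.add_apply, Pi.add_apply, add_mul] using
    (hasSum_phiTerm hθ f₁ p).add (hasSum_phiTerm hθ f₂ p)

lemma Phi_smul (θ : ℝ) (c : ℂ) (f : 𝓢(ℝ, ℂ)) : Phi θ (c • f) = c • Phi θ f := by
  ext p
  simp only [Pi.smul_apply, Phi_apply, phiTerm, _root_.smul_apply, smul_eq_mul, mul_assoc,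
    tsum_mul_left]

/-- The position operator `f ↦ (x ↦ x f(x))` on Schwartz functions. -/
noncomputable def mulByArg : 𝓢(ℝ, ℂ) →L[ℝ] 𝓢(ℝ, ℂ) :=
  smulLeftCLM ℂ (id : ℝ → ℝ)

lemma mulByArg_apply (f : 𝓢(ℝ, ℂ)) (x : ℝ) : mulByArg f x = x * f x := by
  rw [mulByArg, smulLeftCLM_apply_apply (by fun_prop), id, real_smul]

/-- The differential of `phiTerm θ f n`. The factor `n` that comes from the exponential is written
as `((φ + θ n) - φ) / θ`, so that both partial derivatives are again combinations of terms of
`Phi θ` applied to Schwartz functions. -/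
noncomputable def phiTermFDeriv (θ : ℝ) (f : 𝓢(ℝ, ℂ)) (n : ℤ) (p : ℝ × ℝ) : ℝ × ℝ →L[ℝ] ℂ :=
  (ContinuousLinearMap.fst ℝ ℝ ℝ).smulRight (phiTerm θ (derivCLM ℝ ℂ f) n p)
    + (ContinuousLinearMap.snd ℝ ℝ ℝ).smulRight
      (2 * Real.pi * I / θ * (phiTerm θ (mulByArg f) n p - p.1 * phiTerm θ f n p))

lemma hasFDerivAt_phiTerm (hθ : θ ≠ 0) (f : 𝓢(ℝ, ℂ)) (n : ℤ) (p : ℝ × ℝ) :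
    HasFDerivAt (phiTerm θ f n) (phiTermFDeriv θ f n p) p := by
  have hasFDerivAt_translate : HasFDerivAt (fun q : ℝ × ℝ => f (q.1 + θ * n)) _ p :=
    (f.hasDerivAt _).hasFDerivAt.comp p (hasFDerivAt_fst.add_const (θ * n))
  have hasFDerivAt_character :
      HasFDerivAt (fun q : ℝ × ℝ => fourier n (q.2 : UnitAddCircle)) _ p :=
    (hasDerivAt_fourier 1 n p.2).hasFDerivAt.comp p hasFDerivAt_snd
  refine (hasFDerivAt_translate.mul hasFDerivAt_character).congr_fderiv ?_
  have : (θ : ℂ) ≠ 0 := ofReal_ne_zero.mpr hθ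
  ext
  · simp [phiTermFDeriv, phiTerm, mul_comm]
  · simp only [fourier_apply, ContinuousLinearMap.add_comp, ContinuousLinearMap.smul_comp,
      _root_.add_apply, _root_.smul_apply, ContinuousLinearMap.comp_apply,
      ContinuousLinearMap.inr_apply, ContinuousLinearMap.coe_fst', ContinuousLinearMap.coe_snd',
      ContinuousLinearMap.toSpanSingleton_apply, ContinuousLinearMap.smulRight_apply, zero_smul,
      one_smul, smul_eq_mul, mul_zero, add_zero, zero_add, ofReal_one, ofReal_add, ofReal_mul,
      ofReal_intCast, phiTermFDeriv, phiTerm, mulByArg_apply]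
    field_simp
    ring

lemma norm_phiTermFDeriv_le (θ : ℝ) (f : 𝓢(ℝ, ℂ)) (n : ℤ) (p : ℝ × ℝ) :
    ‖phiTermFDeriv θ f n p‖ ≤ ‖derivCLM ℝ ℂ f (p.1 + θ * n)‖ + ‖2 * Real.pi * I / θ‖ *
      (‖mulByArg f (p.1 + θ * n)‖ + |p.1| * ‖f (p.1 + θ * n)‖) := by
  refine (norm_add_le _ _).trans (add_le_add ?_ ?_) <;>
    rw [ContinuousLinearMap.norm_smulRight_apply]
  · rw [norm_phiTerm]
    exact mul_le_of_le_one_left (norm_nonneg _) (ContinuousLinearMap.norm_fst_le ℝ ℝ ℝ)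
  · refine (mul_le_of_le_one_left (norm_nonneg _)
      (ContinuousLinearMap.norm_snd_le ℝ ℝ ℝ)).trans ?_
    rw [norm_mul]
    gcongr
    refine (norm_sub_le _ _).trans_eq ?_
    rw [norm_mul, norm_phiTerm, norm_phiTerm, norm_real, Real.norm_eq_abs]

lemma exists_summable_bound_phiTermFDeriv (hθ : θ ≠ 0) (f : 𝓢(ℝ, ℂ)) (R : ℝ) :
    ∃ u : ℤ → ℝ, Summable u ∧ ∀ (n : ℤ) (p : ℝ × ℝ), |p.1| ≤ R → ‖phiTermFDeriv θ f n p‖ ≤ u n := by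
  obtain ⟨u, hu, deriv_le⟩ := exists_summable_bound_translates hθ (derivCLM ℝ ℂ f) R
  obtain ⟨v, hv, mulByArg_le⟩ := exists_summable_bound_translates hθ (mulByArg f) R
  obtain ⟨w, hw, f_le⟩ := exists_summable_bound_translates hθ f R
  refine ⟨_, hu.add ((hv.add (hw.mul_left R)).mul_left ‖2 * Real.pi * I / θ‖), fun n p hp => ?_⟩
  refine (norm_phiTermFDeriv_le θ f n p).trans ?_
  gcongr
  · exact deriv_le n p.1 hp
  · exact mulByArg_le n p.1 hp
  · exact (abs_nonneg _).trans hp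
  · exact f_le n p.1 hp

lemma hasSum_phiTermFDeriv (hθ : θ ≠ 0) (f : 𝓢(ℝ, ℂ)) (p : ℝ × ℝ) :
    HasSum (fun n => phiTermFDeriv θ f n p)
      ((ContinuousLinearMap.fst ℝ ℝ ℝ).smulRight (Phi θ (derivCLM ℝ ℂ f) p)
        + (ContinuousLinearMap.snd ℝ ℝ ℝ).smulRight
          (2 * Real.pi * I / θ * (Phi θ (mulByArg f) p - p.1 * Phi θ f p))) := by
  have hasSum_sndPartial :=
    ((hasSum_phiTerm hθ (mulByArg f) p).sub ((hasSum_phiTerm hθ f p).mul_left (p.1 : ℂ))).mul_left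
      (2 * Real.pi * I / θ)
  exact ((hasSum_phiTerm hθ _ p).mapL (ContinuousLinearMap.smulRightL ℝ _ ℂ _)).add
    (hasSum_sndPartial.mapL (ContinuousLinearMap.smulRightL ℝ _ ℂ _))

lemma hasFDerivAt_Phi (hθ : θ ≠ 0) (f : 𝓢(ℝ, ℂ)) (p : ℝ × ℝ) :
    HasFDerivAt (Phi θ f)
      ((ContinuousLinearMap.fst ℝ ℝ ℝ).smulRight (Phi θ (derivCLM ℝ ℂ f) p)
        + (ContinuousLinearMap.snd ℝ ℝ ℝ).smulRight
          (2 * Real.pi * I / θ * (Phi θ (mulByArg f) p - p.1 * Phi θ f p))) p := by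
  let strip : Set (ℝ × ℝ) := Metric.ball 0 (|p.1| + 1) ×ˢ Set.univ
  have isOpen_strip : IsOpen strip := Metric.isOpen_ball.prod isOpen_univ
  have isPreconnected_strip : IsPreconnected strip :=
    ((convex_ball _ _).prod convex_univ).isPreconnected
  have p_mem_strip : p ∈ strip := by simp [strip]
  obtain ⟨u, hu, fderiv_le⟩ := exists_summable_bound_phiTermFDeriv hθ f (|p.1| + 1)
  rw [← (hasSum_phiTermFDeriv hθ f p).tsum_eq, show Phi θ f = _ from funext (Phi_apply θ f)]
  exact hasFDerivAt_tsum_of_isPreconnected hu isOpen_strip isPreconnected_strip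
    (fun n q _ => hasFDerivAt_phiTerm hθ f n q)
    (fun n q hq => fderiv_le n q (mem_ball_zero_iff.mp hq.1).le)
    p_mem_strip (hasSum_phiTerm hθ f p).summable p_mem_strip

lemma contDiff_nat_Phi (hθ : θ ≠ 0) (m : ℕ) (f : 𝓢(ℝ, ℂ)) : ContDiff ℝ m (Phi θ f) := by
  induction m generalizing f with
  | zero =>
    exact contDiff_zero.mpr (continuous_iff_continuousAt.mpr
      fun p => (hasFDerivAt_Phi hθ f p).continuousAt)
  | succ m ih =>
    refine contDiff_succ_iff_hasFDerivAt.mpr ⟨_, ?_, hasFDerivAt_Phi hθ f⟩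
    have contDiff_ofReal_fst : ContDiff ℝ m fun p : ℝ × ℝ => (p.1 : ℂ) :=
      ofRealCLM.contDiff.comp contDiff_fst
    exact (contDiff_const.smulRight (ih _)).add (contDiff_const.smulRight
      (contDiff_const.mul ((ih _).sub (contDiff_ofReal_fst.mul (ih f)))))

lemma mem_sectionsGamma_iff {g : ℝ × ℝ → ℂ} : g ∈ SectionsGamma θ ↔ ContDiff ℝ ∞ g
    ∧ (∀ φ ψ : ℝ, g (φ + θ, ψ) = fourier (-1) (ψ : UnitAddCircle) * g (φ, ψ))
    ∧ ∀ φ ψ : ℝ, g (φ, ψ + 1) = g (φ, ψ) := by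
  simp only [← exp_two_pi_mul_I_mul_int_mul, SectionsGamma, Set.mem_ofPred_eq,
    Int.cast_neg, Int.cast_one, mul_neg, mul_one, neg_mul]

lemma Phi_mem_sectionsGamma (hθ : θ ≠ 0) (f : 𝓢(ℝ, ℂ)) : Phi θ f ∈ SectionsGamma θ := by
  refine mem_sectionsGamma_iff.mpr
    ⟨contDiff_infty.mpr fun m => contDiff_nat_Phi hθ m f, fun φ ψ => ?_, fun φ ψ => ?_⟩
  · rw [Phi_apply, Phi_apply, ← tsum_mul_left, ← (Equiv.subRight (1 : ℤ)).tsum_eq]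
    refine tsum_congr fun n => ?_
    have translate_eq : φ + θ + θ * ((n - 1 : ℤ) : ℝ) = φ + θ * n := by push_cast; ring
    rw [phiTerm, phiTerm, Equiv.subRight_apply, translate_eq, sub_eq_neg_add, fourier_add]
    ring
  · simp only [Phi_apply, phiTerm, AddCircle.coe_add, AddCircle.coe_period, add_zero]

end Phi

section FiberIntegral

variable {E : Type*} [NormedAddCommGroup E] [NormedSpace ℝ E]

/-- The partial derivative `∂g/∂φ` of a function `g(φ, ψ)` on the plane. -/
noncomputable def fstDeriv (g : ℝ × ℝ → E) (p : ℝ × ℝ) : E := fderiv ℝ g p (1, 0)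

/-- The partial derivative `∂g/∂ψ` of a function `g(φ, ψ)` on the plane. -/
noncomputable def sndDeriv (g : ℝ × ℝ → E) (p : ℝ × ℝ) : E := fderiv ℝ g p (0, 1)

/-- The integral of `g(φ, ·)` over a period, as a function of `φ`. On sections of `γ` this is the
inverse of `Phi`. -/
noncomputable def fiberIntegral (g : ℝ × ℝ → E) (φ : ℝ) : E := ∫ ψ in (0 : ℝ)..1, g (φ, ψ)

variable {g : ℝ × ℝ → E}

lemma hasDerivAt_fstDeriv {φ ψ : ℝ} (hg : DifferentiableAt ℝ g (φ, ψ)) :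
    HasDerivAt (fun t => g (t, ψ)) (fstDeriv g (φ, ψ)) φ :=
  hg.hasFDerivAt.comp_hasDerivAt φ ((hasDerivAt_id φ).prodMk (hasDerivAt_const φ ψ))

lemma hasDerivAt_sndDeriv {φ ψ : ℝ} (hg : DifferentiableAt ℝ g (φ, ψ)) :
    HasDerivAt (fun t => g (φ, t)) (sndDeriv g (φ, ψ)) ψ :=
  hg.hasFDerivAt.comp_hasDerivAt ψ ((hasDerivAt_const ψ φ).prodMk (hasDerivAt_id ψ))

lemma contDiff_fstDeriv {m n : WithTop ℕ∞} (hg : ContDiff ℝ n g) (hmn : m + 1 ≤ n) :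
    ContDiff ℝ m (fstDeriv g) :=
  (hg.fderiv_right hmn).clm_apply contDiff_const

lemma contDiff_sndDeriv {m n : WithTop ℕ∞} (hg : ContDiff ℝ n g) (hmn : m + 1 ≤ n) :
    ContDiff ℝ m (sndDeriv g) :=
  (hg.fderiv_right hmn).clm_apply contDiff_const

lemma hasDerivAt_fiberIntegral (hg : ContDiff ℝ 1 g) (φ : ℝ) :
    HasDerivAt (fiberIntegral g) (fiberIntegral (fstDeriv g) φ) φ := by
  have continuous_fstDeriv : Continuous (fstDeriv g) :=
    (contDiff_fstDeriv (m := 0) hg (zero_add 1).le).continuous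
  have continuous_slice (t : ℝ) : Continuous fun ψ => g (t, ψ) := hg.continuous.comp (by fun_prop)
  obtain ⟨C, hC⟩ := (((isCompact_closedBall φ 1).prod
    isCompact_uIcc).exists_bound_of_continuousOn continuous_fstDeriv.continuousOn)
  refine (intervalIntegral.hasDerivAt_integral_of_dominated_loc_of_deriv_le
    (F := fun t ψ => g (t, ψ)) (F' := fun t ψ => fstDeriv g (t, ψ)) (bound := fun _ => C)
    (Metric.closedBall_mem_nhds φ one_pos)
    (.of_forall fun t => (continuous_slice t).aestronglyMeasurable)
    ((continuous_slice φ).intervalIntegrable 0 1)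
    (continuous_fstDeriv.comp (by fun_prop)).aestronglyMeasurable
    (.of_forall fun ψ hψ t ht => hC (t, ψ) ⟨ht, Set.uIoc_subset_uIcc hψ⟩)
    intervalIntegrable_const
    (.of_forall fun ψ _ t _ => hasDerivAt_fstDeriv (hg.differentiable one_ne_zero _))).2

lemma contDiff_iterate_fstDeriv (hg : ContDiff ℝ ∞ g) (n : ℕ) : ContDiff ℝ ∞ (fstDeriv^[n] g) :=
  Function.Iterate.rec (ContDiff ℝ ∞) hg (fun _ h => contDiff_fstDeriv h le_rfl) n

lemma iteratedDeriv_fiberIntegral (hg : ContDiff ℝ ∞ g) (n : ℕ) :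
    iteratedDeriv n (fiberIntegral g) = fiberIntegral (fstDeriv^[n] g) := by
  induction n with
  | zero => exact iteratedDeriv_zero
  | succ n ih =>
    ext φ
    rw [iteratedDeriv_succ, ih, iterate_succ_apply']
    exact (hasDerivAt_fiberIntegral ((contDiff_iterate_fstDeriv hg n).of_le (by simp)) φ).deriv

lemma contDiff_fiberIntegral (hg : ContDiff ℝ ∞ g) : ContDiff ℝ ∞ (fiberIntegral g) := by
  refine contDiff_of_differentiable_iteratedDeriv fun n _ φ => ?_
  rw [iteratedDeriv_fiberIntegral hg]
  exact (hasDerivAt_fiberIntegral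
    ((contDiff_iterate_fstDeriv hg n).of_le (by simp)) φ).differentiableAt

end FiberIntegral

section Sections

variable {θ : ℝ} {g : ℝ × ℝ → ℂ}

lemma apply_add_mul_int_of_mem_sectionsGamma (hg : g ∈ SectionsGamma θ) (n : ℤ) (φ ψ : ℝ) :
    g (φ + θ * n, ψ) = fourier (-n) (ψ : UnitAddCircle) * g (φ, ψ) := by
  have shift := (mem_sectionsGamma_iff.mp hg).2.1
  have shift_neg (φ : ℝ) : g (φ - θ, ψ) = fourier 1 (ψ : UnitAddCircle) * g (φ, ψ) := by
    have := shift (φ - θ) ψ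
    rw [sub_add_cancel] at this
    rw [this, ← mul_assoc, ← fourier_add, add_neg_cancel, fourier_zero, one_mul]
  induction n with
  | zero => simp
  | succ n ih =>
    have : φ + θ * ((n + 1 : ℤ) : ℝ) = φ + θ * (n : ℤ) + θ := by push_cast; ring
    rw [this, shift, ih, ← mul_assoc, ← fourier_add, neg_add_rev]
  | pred n ih =>
    have : φ + θ * ((-n - 1 : ℤ) : ℝ) = φ + θ * (-n : ℤ) - θ := by push_cast; ring
    rw [this, shift_neg, ih, ← mul_assoc, ← fourier_add, neg_sub, sub_eq_add_neg]

lemma apply_fract_mul_fourier_of_mem_sectionsGamma (hθ : θ ≠ 0) (hg : g ∈ SectionsGamma θ)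
    (x ψ : ℝ) :
    g (θ * Int.fract (x / θ), ψ) * fourier (-⌊x / θ⌋) (ψ : UnitAddCircle) = g (x, ψ) := by
  have fract_add_floor : θ * Int.fract (x / θ) + θ * ⌊x / θ⌋ = x := by
    rw [← mul_add, Int.fract_add_floor, mul_div_cancel₀ x hθ]
  rw [mul_comm, ← apply_add_mul_int_of_mem_sectionsGamma hg, fract_add_floor]

lemma exists_norm_le_of_mem_sectionsGamma (hθ : θ ≠ 0) (hg : g ∈ SectionsGamma θ) :
    ∃ C, ∀ p, ‖g p‖ ≤ C := by
  obtain ⟨contDiff_g, -, periodic_g⟩ := mem_sectionsGamma_iff.mp hg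
  have isCompact_unitInterval : IsCompact (Set.Icc (0 : ℝ) 1) := isCompact_Icc
  obtain ⟨C, hC⟩ := ((isCompact_unitInterval.image (continuous_const_mul θ)).prod
    isCompact_unitInterval).exists_bound_of_continuousOn contDiff_g.continuous.continuousOn
  refine ⟨C, fun ⟨φ, ψ⟩ => ?_⟩
  have fract_mem (t : ℝ) : Int.fract t ∈ Set.Icc (0 : ℝ) 1 :=
    ⟨Int.fract_nonneg t, (Int.fract_lt_one t).le⟩
  have apply_fract : g (φ, Int.fract ψ) = g (φ, ψ) := by
    have periodic_slice : Periodic (fun t => g (φ, t)) 1 := periodic_g φ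
    simpa only [mul_one, Int.self_sub_floor] using periodic_slice.sub_int_mul_eq ⌊ψ⌋ (x := ψ)
  rw [← apply_fract, ← apply_fract_mul_fourier_of_mem_sectionsGamma hθ hg, norm_mul,
    norm_fourier_apply, mul_one]
  exact hC _ ⟨Set.mem_image_of_mem _ (fract_mem _), fract_mem _⟩

lemma fstDeriv_mem_sectionsGamma (hg : g ∈ SectionsGamma θ) : fstDeriv g ∈ SectionsGamma θ := by
  obtain ⟨contDiff_g, shift, periodic_g⟩ := mem_sectionsGamma_iff.mp hg
  have hasDerivAt_g (φ ψ : ℝ) : HasDerivAt (fun t => g (t, ψ)) (fstDeriv g (φ, ψ)) φ :=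
    hasDerivAt_fstDeriv (contDiff_g.differentiable (by simp) _)
  refine mem_sectionsGamma_iff.mpr
    ⟨contDiff_fstDeriv contDiff_g le_rfl, fun φ ψ => ?_, fun φ ψ => ?_⟩
  · have hasDerivAt_shift := (hasDerivAt_g (φ + θ) ψ).comp_add_const φ θ
    simp only [shift] at hasDerivAt_shift
    exact hasDerivAt_shift.unique ((hasDerivAt_g φ ψ).const_mul _)
  · have hasDerivAt_shift := hasDerivAt_g φ (ψ + 1)
    simp only [periodic_g] at hasDerivAt_shift
    exact hasDerivAt_shift.unique (hasDerivAt_g φ ψ)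

/-- The operator `g ↦ φ g + (θ / 2πi) ∂g/∂ψ`, which `Phi` intertwines with multiplication by the
argument. The zeroth-order term makes it preserve the quasi-periodicity conditions, which `∂/∂ψ`
alone does not. -/
noncomputable def positionOp (θ : ℝ) (g : ℝ × ℝ → ℂ) (p : ℝ × ℝ) : ℂ :=
  p.1 * g p + θ / (2 * Real.pi * I) * sndDeriv g p

lemma positionOp_mem_sectionsGamma (hg : g ∈ SectionsGamma θ) :
    positionOp θ g ∈ SectionsGamma θ := by
  obtain ⟨contDiff_g, shift, periodic_g⟩ := mem_sectionsGamma_iff.mp hg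
  have hasDerivAt_g (φ ψ : ℝ) : HasDerivAt (fun t => g (φ, t)) (sndDeriv g (φ, ψ)) ψ :=
    hasDerivAt_sndDeriv (contDiff_g.differentiable (by simp) _)
  refine mem_sectionsGamma_iff.mpr ⟨?_, fun φ ψ => ?_, fun φ ψ => ?_⟩
  · exact ((ofRealCLM.contDiff.comp contDiff_fst).mul contDiff_g).add
      (contDiff_const.mul (contDiff_sndDeriv contDiff_g le_rfl))
  · have sndDeriv_shift : sndDeriv g (φ + θ, ψ) = fourier (-1) (ψ : UnitAddCircle) *
        (sndDeriv g (φ, ψ) - 2 * Real.pi * I * g (φ, ψ)) := by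
      have hasDerivAt_shift := hasDerivAt_g (φ + θ) ψ
      simp only [shift] at hasDerivAt_shift
      rw [hasDerivAt_shift.unique ((hasDerivAt_fourier 1 (-1) ψ).mul (hasDerivAt_g φ ψ))]
      push_cast
      ring
    simp only [positionOp, sndDeriv_shift, shift, ofReal_add]
    field_simp [Real.pi_ne_zero, I_ne_zero]
    ring
  · have sndDeriv_shift : sndDeriv g (φ, ψ + 1) = sndDeriv g (φ, ψ) := by
      have hasDerivAt_shift := (hasDerivAt_g φ (ψ + 1)).comp_add_const ψ 1
      simp only [periodic_g] at hasDerivAt_shift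
      exact hasDerivAt_shift.unique (hasDerivAt_g φ ψ)
    simp only [positionOp, sndDeriv_shift, periodic_g]

lemma fiberIntegral_positionOp (hg : ContDiff ℝ 1 g) {x : ℝ} (hx : g (x, 1) = g (x, 0)) :
    fiberIntegral (positionOp θ g) x = x * fiberIntegral g x := by
  have continuous_g : Continuous fun ψ : ℝ => g (x, ψ) := hg.continuous.comp (by fun_prop)
  have continuous_sndDeriv : Continuous fun ψ : ℝ => sndDeriv g (x, ψ) :=
    (contDiff_sndDeriv (m := 0) hg (zero_add 1).le).continuous.comp (by fun_prop)
  have integral_sndDeriv : ∫ ψ in (0 : ℝ)..1, sndDeriv g (x, ψ) = 0 := by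
    rw [intervalIntegral.integral_eq_sub_of_hasDerivAt
      (fun ψ _ => hasDerivAt_sndDeriv (hg.differentiable one_ne_zero (x, ψ)))
      (continuous_sndDeriv.intervalIntegrable 0 1), hx, sub_self]
  simp only [fiberIntegral, positionOp]
  rw [intervalIntegral.integral_add ((continuous_g.const_mul _).intervalIntegrable 0 1)
    ((continuous_sndDeriv.const_mul _).intervalIntegrable 0 1),
    intervalIntegral.integral_const_mul, intervalIntegral.integral_const_mul, integral_sndDeriv,
    mul_zero, add_zero]

lemma exists_norm_fiberIntegral_le (hθ : θ ≠ 0) (hg : g ∈ SectionsGamma θ) :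
    ∃ C, ∀ x, ‖fiberIntegral g x‖ ≤ C := by
  obtain ⟨C, hC⟩ := exists_norm_le_of_mem_sectionsGamma hθ hg
  refine ⟨C, fun x => ?_⟩
  simpa [fiberIntegral] using
    intervalIntegral.norm_integral_le_of_norm_le_const (a := 0) (b := 1) fun ψ _ => hC (x, ψ)

lemma exists_pow_mul_norm_fiberIntegral_le (hθ : θ ≠ 0) (hg : g ∈ SectionsGamma θ) (k : ℕ) :
    ∃ C, ∀ x : ℝ, ‖x‖ ^ k * ‖fiberIntegral g x‖ ≤ C := by
  induction k generalizing g with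
  | zero => simpa using exists_norm_fiberIntegral_le hθ hg
  | succ k ih =>
    obtain ⟨contDiff_g, -, periodic_g⟩ := mem_sectionsGamma_iff.mp hg
    obtain ⟨C, hC⟩ := ih (positionOp_mem_sectionsGamma hg)
    refine ⟨C, fun x => ?_⟩
    have apply_one : g (x, 1) = g (x, 0) := by simpa using periodic_g x 0
    simpa [fiberIntegral_positionOp (contDiff_g.of_le (by simp)) apply_one, pow_succ, mul_assoc]
      using hC x

lemma iterate_fstDeriv_mem_sectionsGamma (hg : g ∈ SectionsGamma θ) (n : ℕ) :
    fstDeriv^[n] g ∈ SectionsGamma θ :=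
  Function.Iterate.rec (· ∈ SectionsGamma θ) hg (fun _ h => fstDeriv_mem_sectionsGamma h) n

/-- The fibre integral of a section of `γ`, as a Schwartz function. -/
noncomputable def fiberIntegralSchwartz (hθ : θ ≠ 0) (hg : g ∈ SectionsGamma θ) : 𝓢(ℝ, ℂ) where
  toFun := fiberIntegral g
  smooth' := contDiff_fiberIntegral hg.1
  decay' k n := by
    simpa only [norm_iteratedFDeriv_eq_norm_iteratedDeriv, iteratedDeriv_fiberIntegral hg.1] using
      exists_pow_mul_norm_fiberIntegral_le hθ (iterate_fstDeriv_mem_sectionsGamma hg n) k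

end Sections

section Inversion

variable {θ : ℝ} {g : ℝ × ℝ → ℂ}

lemma fiberIntegral_Phi (hθ : θ ≠ 0) (f : 𝓢(ℝ, ℂ)) (x : ℝ) : fiberIntegral (Phi θ f) x = f x := by
  have zeroth_coeff := fourierCoeff_tsum_mul_fourier (T := 1) (summable_translates hθ f x) 0
  rw [fourierCoeff_eq_intervalIntegral _ 0 0] at zeroth_coeff
  simpa [fiberIntegral, Phi_apply, phiTerm] using zeroth_coeff

lemma Phi_fiberIntegralSchwartz (hθ : θ ≠ 0) (hg : g ∈ SectionsGamma θ) :
    Phi θ (fiberIntegralSchwartz hθ hg) = g := by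
  obtain ⟨contDiff_g, -, periodic_g⟩ := mem_sectionsGamma_iff.mp hg
  ext ⟨φ, ψ⟩
  have periodic_slice : Periodic (fun t => g (φ, t)) 1 := periodic_g φ
  have continuous_slice : Continuous fun t : ℝ => g (φ, t) :=
    contDiff_g.continuous.comp (by fun_prop)
  have coeff_eq (n : ℤ) :
      fourierCoeff periodic_slice.lift n = fiberIntegralSchwartz hθ hg (φ + θ * n) := by
    rw [fourierCoeff_eq_intervalIntegral _ n 0, one_div, inv_one, one_smul, zero_add]
    exact intervalIntegral.integral_congr fun t _ =>
      (apply_add_mul_int_of_mem_sectionsGamma hg n φ t).symm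
  have hasSum_slice := hasSum_fourier_series_of_periodic continuous_slice periodic_slice
    ((summable_translates hθ _ φ).congr fun n => (coeff_eq n).symm) ψ
  simp only [coeff_eq] at hasSum_slice
  exact (hasSum_phiTerm hθ _ (φ, ψ)).unique hasSum_slice

lemma fiberIntegral_eq_integral_fract (hθ : θ ≠ 0) (hg : g ∈ SectionsGamma θ) (x : ℝ) :
    fiberIntegral g x = ∫ ψ in (0 : ℝ)..1, g (θ * Int.fract (x / θ), ψ)
      * exp (-(2 * Real.pi * I * (⌊x / θ⌋ : ℤ) * ψ)) := by
  refine intervalIntegral.integral_congr fun ψ _ => ?_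
  have := exp_two_pi_mul_I_mul_int_mul (-⌊x / θ⌋) ψ
  simp only [Int.cast_neg, mul_neg, neg_mul] at this
  simp only [this, apply_fract_mul_fourier_of_mem_sectionsGamma hθ hg]

end Inversion

theorem stmt3_general (θ : ℝ) (hθ : θ ≠ 0) :
    (∀ f₁ f₂ : SchwartzMap ℝ ℂ, Phi θ (f₁ + f₂) = Phi θ f₁ + Phi θ f₂)
    ∧ (∀ (c : ℂ) (f : SchwartzMap ℝ ℂ), Phi θ (c • f) = c • Phi θ f)
    ∧ Set.BijOn (fun f : SchwartzMap ℝ ℂ => Phi θ f) Set.univ (SectionsGamma θ)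
    ∧ (∀ g ∈ SectionsGamma θ, ∀ f : SchwartzMap ℝ ℂ, Phi θ f = g →
        ∀ x : ℝ, f x = ∫ ψ in (0:ℝ)..1,
          g (θ * Int.fract (x / θ), ψ)
            * Complex.exp (-(2 * Real.pi * Complex.I * (⌊x / θ⌋ : ℤ) * ψ))) := by
  refine ⟨Phi_add hθ, Phi_smul θ, ⟨fun f _ => Phi_mem_sectionsGamma hθ f, ?injOn, ?surjOn⟩,
    ?inverse⟩
  case injOn =>
    intro f₁ _ f₂ _ (h : Phi θ f₁ = Phi θ f₂)
    ext x
    rw [← fiberIntegral_Phi hθ f₁, h, fiberIntegral_Phi hθ f₂]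
  case surjOn =>
    exact fun g hg => ⟨fiberIntegralSchwartz hθ hg, trivial, Phi_fiberIntegralSchwartz hθ hg⟩
  case inverse =>
    rintro g hg f rfl x
    rw [← fiberIntegral_eq_integral_fract hθ hg, fiberIntegral_Phi hθ]

theorem stmt3 (θ : ℝ) (hθ0 : 0 < θ) (hθ1 : θ ≤ 1) :
    (∀ f₁ f₂ : SchwartzMap ℝ ℂ, Phi θ (f₁ + f₂) = Phi θ f₁ + Phi θ f₂)
    ∧ (∀ (c : ℂ) (f : SchwartzMap ℝ ℂ), Phi θ (c • f) = c • Phi θ f)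
    ∧ Set.BijOn (fun f : SchwartzMap ℝ ℂ => Phi θ f) Set.univ (SectionsGamma θ)
    ∧ (∀ g ∈ SectionsGamma θ, ∀ f : SchwartzMap ℝ ℂ, Phi θ f = g →
        ∀ x : ℝ, f x = ∫ ψ in (0:ℝ)..1,
          g (θ * Int.fract (x / θ), ψ)
            * Complex.exp (-(2 * Real.pi * Complex.I * (⌊x / θ⌋ : ℤ) * ψ))) :=
  stmt3_general θ hθ0.ne'
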